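/- If a sequence σ over a finite semigroup Γ has a Ramseyan factorisation, then σ has a Ramseyan factorisation whose color c is idempotent, i.e. c + c = c. -/

import Mathlib

namespace Buechi

/-- Nonempty finite strings over `α`, given as a head together with a tail. -/
abbrev NStr (α : Type*) : Type _ := α × List α

/-- The list of symbols of a nonempty string. -/
def NStr.toList {α : Type*} (s : NStr α) : List α := s.1 :: s.2

/-- The color of a nonempty string over a semigroup: the product of its symbols. -/
def col {Γ : Type*} [Semigroup Γ] (s : NStr Γ) : Γ := s.2.foldl (· * ·) s.1

/-- The string `σ[i,j) = σ i, σ (i+1), …, σ (j-1)` (meaningful for `i < j`). -/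
def seg {α : Type*} (σ : ℕ → α) (i j : ℕ) : NStr α :=
  (σ i, (List.range' (i + 1) (j - i - 1)).map σ)

/-- Starting position of the `n`-th factor of a factorisation `τ`. -/
def facStart {α : Type*} (τ : ℕ → NStr α) : ℕ → ℕ
  | 0 => 0
  | n + 1 => facStart τ n + (τ n).toList.length

/-- `τ` is a factorisation of `σ`: `σ` equals the infinite concatenation
`(τ 0)(τ 1)(τ 2)⋯`. -/
def IsFactorisation {α : Type*} (τ : ℕ → NStr α) (σ : ℕ → α) : Prop :=
  ∀ (n k : ℕ) (h : k < (τ n).toList.length),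
    (τ n).toList.get ⟨k, h⟩ = σ (facStart τ n + k)

/-- A Ramseyan factorisation of `σ`: a factorisation all of whose factors
`τ 1, τ 2, τ 3, …` have the same color. -/
def IsRamseyanFactorisation {Γ : Type*} [Semigroup Γ] (τ : ℕ → NStr Γ) (σ : ℕ → Γ) : Prop :=
  IsFactorisation τ σ ∧ ∃ c : Γ, ∀ n ≥ 1, col (τ n) = c

/-!
In a Ramseyan factorisation of color `c`, merging the factors after the first into blocks of `m`
consecutive ones gives a Ramseyan factorisation of color `c ^ m`. Every element of the subsemigroup
generated by `c` is therefore the color of a Ramseyan factorisation, and a nonempty finite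
semigroup contains an idempotent.
-/

section Strings

variable {α : Type*}

theorem NStr.toList_injective : Function.Injective (NStr.toList (α := α)) := by
  rintro ⟨a, l⟩ ⟨b, m⟩ h
  simpa [NStr.toList] using h

theorem toList_seg (σ : ℕ → α) {i j : ℕ} (hij : i < j) :
    (seg σ i j).toList = (List.range' i (j - i)).map σ := by
  obtain ⟨n, rfl⟩ := Nat.exists_eq_add_of_lt hij
  simp [seg, NStr.toList, add_assoc, List.range'_succ]

theorem length_toList_seg (σ : ℕ → α) {i j : ℕ} (hij : i < j) :
    (seg σ i j).toList.length = j - i := by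
  simp [toList_seg σ hij]

theorem toList_seg_append_toList_seg (σ : ℕ → α) {i j k : ℕ} (hij : i < j) (hjk : j < k) :
    (seg σ i j).toList ++ (seg σ j k).toList = (seg σ i k).toList := by
  rw [toList_seg σ hij, toList_seg σ hjk, toList_seg σ (hij.trans hjk), ← List.map_append]
  congr 1
  obtain ⟨m, rfl⟩ := Nat.exists_eq_add_of_le hij.le
  rw [Nat.add_sub_cancel_left, List.range'_append_1]
  congr 1
  omega

end Strings

section Colors

variable {Γ : Type*} [Semigroup Γ]

theorem col_mul_col_of_toList_append {s t u : NStr Γ} (h : s.toList ++ t.toList = u.toList) :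
    col s * col t = col u := by
  obtain rfl : (s.1, s.2 ++ t.toList) = u := NStr.toList_injective h
  simp [col, NStr.toList, List.foldl_assoc]

theorem col_seg_mul_col_seg (σ : ℕ → Γ) {i j k : ℕ} (hij : i < j) (hjk : j < k) :
    col (seg σ i j) * col (seg σ j k) = col (seg σ i k) :=
  col_mul_col_of_toList_append (toList_seg_append_toList_seg σ hij hjk)

end Colors

section Factorisations

variable {α : Type*}

theorem facStart_strictMono (τ : ℕ → NStr α) : StrictMono (facStart τ) :=
  strictMono_nat_of_lt_succ fun n => by simp [facStart, NStr.toList]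

theorem IsFactorisation.eq_seg {σ : ℕ → α} {τ : ℕ → NStr α} (hτ : IsFactorisation τ σ) (n : ℕ) :
    τ n = seg σ (facStart τ n) (facStart τ (n + 1)) := by
  have hlt := facStart_strictMono τ n.lt_succ_self
  apply NStr.toList_injective
  apply List.ext_getElem
  · rw [length_toList_seg σ hlt, facStart, Nat.add_sub_cancel_left]
  · intro k hk _
    simpa [toList_seg σ hlt] using hτ n k hk

theorem facStart_seg (σ : ℕ → α) {f : ℕ → ℕ} (hf : StrictMono f) (hf₀ : f 0 = 0) (n : ℕ) :
    facStart (fun n => seg σ (f n) (f (n + 1))) n = f n := by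
  induction n with
  | zero => exact hf₀.symm
  | succ n ih =>
    have hlt : f n < f (n + 1) := hf n.lt_succ_self
    rw [facStart, ih, length_toList_seg σ hlt, Nat.add_sub_cancel' hlt.le]

theorem isFactorisation_seg (σ : ℕ → α) {f : ℕ → ℕ} (hf : StrictMono f) (hf₀ : f 0 = 0) :
    IsFactorisation (fun n => seg σ (f n) (f (n + 1))) σ := by
  intro n k hk
  simp [facStart_seg σ hf hf₀, toList_seg σ (hf n.lt_succ_self)]

end Factorisations

section Regrouping

/-- The cut positions `0, 1, m + 1, 2 * m + 1, …`: the first factor of a factorisation is kept and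
the later ones are grouped into blocks of `m`. -/
def blockStart (m : ℕ) : ℕ → ℕ
  | 0 => 0
  | n + 1 => n * m + 1

theorem blockStart_strictMono {m : ℕ} (hm : 0 < m) : StrictMono (blockStart m) := by
  refine strictMono_nat_of_lt_succ fun n => ?_
  cases n with
  | zero => simp [blockStart]
  | succ n => simpa [blockStart] using Nat.mul_lt_mul_of_pos_right n.lt_succ_self hm

theorem blockStart_succ {m n : ℕ} (hn : 1 ≤ n) : blockStart m (n + 1) = blockStart m n + m := by
  obtain ⟨n, rfl⟩ := Nat.exists_eq_add_of_le' hn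
  simp only [blockStart]
  ring

variable {Γ : Type*} [Semigroup Γ] {σ : ℕ → Γ} {c x : Γ}

theorem exists_col_seg_eq_of_mem_closure {f : ℕ → ℕ} (hf : StrictMono f)
    (hc : ∀ n ≥ 1, col (seg σ (f n) (f (n + 1))) = c) (hx : x ∈ Subsemigroup.closure {c}) :
    ∃ m > 0, ∀ n ≥ 1, col (seg σ (f n) (f (n + m))) = x := by
  induction hx using Subsemigroup.closure_induction with
  | mem x hx =>
    obtain rfl : x = c := hx
    exact ⟨1, one_pos, hc⟩
  | mul x y _ _ ihx ihy =>
    obtain ⟨a, ha, hxa⟩ := ihx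
    obtain ⟨b, hb, hyb⟩ := ihy
    refine ⟨a + b, by omega, fun n hn => ?_⟩
    calc col (seg σ (f n) (f (n + (a + b))))
        = col (seg σ (f n) (f (n + a))) * col (seg σ (f (n + a)) (f (n + a + b))) := by
          rw [col_seg_mul_col_seg σ (hf (by omega)) (hf (by omega)), add_assoc]
      _ = x * y := by rw [hxa n hn, hyb (n + a) (by omega)]

theorem IsFactorisation.exists_col_eq_of_mem_closure {τ : ℕ → NStr Γ} (hτ : IsFactorisation τ σ)
    (hc : ∀ n ≥ 1, col (τ n) = c) (hx : x ∈ Subsemigroup.closure {c}) :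
    ∃ τ' : ℕ → NStr Γ, IsFactorisation τ' σ ∧ ∀ n ≥ 1, col (τ' n) = x := by
  have hf := facStart_strictMono τ
  have hcf : ∀ n ≥ 1, col (seg σ (facStart τ n) (facStart τ (n + 1))) = c :=
    fun n hn => hτ.eq_seg n ▸ hc n hn
  obtain ⟨m, hm, hxm⟩ := exists_col_seg_eq_of_mem_closure hf hcf hx
  have hg := blockStart_strictMono hm
  refine ⟨_, isFactorisation_seg σ (hf.comp hg) rfl, fun n hn => ?_⟩
  simpa only [Function.comp_apply, blockStart_succ hn] using
    hxm (blockStart m n) (hn.trans hg.le_apply)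

end Regrouping

theorem exists_isIdempotentElem_of_finite (S : Type*) [Semigroup S] [Finite S] [Nonempty S] :
    ∃ e : S, IsIdempotentElem e := by
  let : TopologicalSpace S := ⊥
  have : DiscreteTopology S := ⟨rfl⟩
  exact exists_idempotent_of_compact_t2_of_continuous_mul_left
    fun _ => continuous_of_discreteTopology

theorem exists_isIdempotentElem_mem_closure_singleton {S : Type*} [Semigroup S] [Finite S] (c : S) :
    ∃ e ∈ Subsemigroup.closure {c}, IsIdempotentElem e := by
  have : Nonempty (Subsemigroup.closure {c}) := ⟨c, Subsemigroup.mem_closure_of_mem rfl⟩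
  obtain ⟨⟨e, he⟩, hee⟩ := exists_isIdempotentElem_of_finite (Subsemigroup.closure {c})
  exact ⟨e, he, congrArg Subtype.val hee⟩

theorem ramseyan_factorisation_idempotent_general {Γ : Type*} [Semigroup Γ]
    (hΓ : ∀ c : Γ, ∃ e ∈ Subsemigroup.closure {c}, IsIdempotentElem e)
    (σ : ℕ → Γ) (h : ∃ τ : ℕ → NStr Γ, IsRamseyanFactorisation τ σ) :
    ∃ τ : ℕ → NStr Γ, IsFactorisation τ σ ∧
      ∃ c : Γ, c * c = c ∧ ∀ n ≥ 1, col (τ n) = c := by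
  obtain ⟨τ, hτ, c, hc⟩ := h
  obtain ⟨e, he, hee⟩ := hΓ c
  obtain ⟨τ', hτ', hcol⟩ := hτ.exists_col_eq_of_mem_closure hc he
  exact ⟨τ', hτ', e, hee, hcol⟩

/-- If a sequence over a finite semigroup has a Ramseyan factorisation, then it
has one whose color is idempotent. -/
theorem ramseyan_factorisation_idempotent {Γ : Type*} [Fintype Γ] [Semigroup Γ]
    (σ : ℕ → Γ) (h : ∃ τ : ℕ → NStr Γ, IsRamseyanFactorisation τ σ) :
    ∃ τ : ℕ → NStr Γ, IsFactorisation τ σ ∧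
      ∃ c : Γ, c * c = c ∧ ∀ n ≥ 1, col (τ n) = c :=
  ramseyan_factorisation_idempotent_general exists_isIdempotentElem_mem_closure_singleton σ h

end Buechi
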